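/- Let U ⊆ ℂⁿ be open, let f : U → ℂ be holomorphic, and let z₀ ∈ U be a point such that f does not vanish identically on any neighborhood of z₀. Then there exists an open neighborhood V of z₀ with V ⊆ U such that the (2n−2)-dimensional Hausdorff measure of the zero set {z ∈ V : f(z) = 0} is finite. In particular, the complex hypersurface Z_f = f^{−1}(0) has locally finite (2n−2)-dimensional volume near each of its points, including the singular points of Z_f. -/

import Mathlib

open MeasureTheory
open scoped MeasureTheory

noncomputable instance euclideanSpaceComplexMeasurableSpace (n : ℕ) :
    MeasurableSpace (EuclideanSpace ℂ (Fin n)) := borel _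

instance euclideanSpaceComplexBorelSpace (n : ℕ) :
    BorelSpace (EuclideanSpace ℂ (Fin n)) := ⟨rfl⟩

/-!
Around a zero at which the derivative of `f` does not vanish and is, up to a constant `K`, as large
along a direction `v` as along any other, the projection along `v` onto `E ⧸ ℂ ∙ v` is
antilipschitz on the zero set, with a constant depending only on `K` and `v`. If moreover
`f (z₀ + v) ≠ 0`, the Jensen-type bound for the zeros of `f` on the complex lines parallel to `v`
bounds the number of points of the fibers uniformly. So the measure of the set of these zeros is at
most a constant times that of a bounded subset of `E ⧸ ℂ ∙ v`, a space of real dimension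
`2 * n - 2`. Finitely many directions `v` suffice for all nonzero derivatives.

The remaining zeros are among those of the directional derivative `∂ᵥf`. Choosing `v` such that `f`
does not vanish identically on the line through `z₀` along `v`, the vanishing order of `∂ᵥf` on this
line is smaller than that of `f`, and induction on this order concludes.
-/

open Filter Metric Set
open scoped Topology NNReal ENNReal

theorem exists_ball_subset_forall_norm_le {X F : Type*} [PseudoMetricSpace X]
    [SeminormedAddCommGroup F] {f : X → F} {U : Set X}
    (hU : IsOpen U) (hf : ContinuousOn f U) {c : X} (hc : c ∈ U) :
    ∃ r > 0, ball c r ⊆ U ∧ ∃ M, ∀ z ∈ ball c r, ‖f z‖ ≤ M := by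
  have hbound : ∀ᶠ z in 𝓝 c, ‖f z‖ ≤ ‖f c‖ + 1 :=
    (hf.continuousAt (hU.mem_nhds hc)).norm.eventually_le_const (lt_add_one _)
  obtain ⟨r, hr, hball⟩ :=
    eventually_nhds_iff_ball.1 ((hU.eventually_mem hc).and hbound)
  exact ⟨r, hr, fun z hz ↦ (hball z hz).1, ‖f c‖ + 1, fun z hz ↦ (hball z hz).2⟩

section Holomorphic

variable {E F : Type*} [NormedAddCommGroup E] [NormedSpace ℂ E]
  [NormedAddCommGroup F] [NormedSpace ℂ F]

theorem norm_fderiv_le_of_forall_mem_ball_norm_le {f : E → F} {c : E} {r M : ℝ} (hr : 0 < r)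
    (hf : DifferentiableOn ℂ f (ball c r)) (hM : ∀ z ∈ ball c r, ‖f z‖ ≤ M) :
    ‖fderiv ℂ f c‖ ≤ 2 * M / r := by
  refine Complex.norm_fderiv_le_div_of_mapsTo_ball hf (fun z hz ↦ ?_) hr
  rw [mem_closedBall, dist_eq_norm, two_mul]
  exact norm_sub_le_of_le (hM z hz) (hM c (mem_ball_self hr))

theorem norm_sub_le_of_forall_mem_ball_add_norm_le {f : E → F} {c : E} {r s M : ℝ} (hr : 0 < r)
    (hf : DifferentiableOn ℂ f (ball c (r + s))) (hM : ∀ z ∈ ball c (r + s), ‖f z‖ ≤ M)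
    {x y : E} (hx : x ∈ ball c s) (hy : y ∈ ball c s) :
    ‖f y - f x‖ ≤ 2 * M / r * ‖y - x‖ := by
  refine (convex_ball c s).norm_image_sub_le_of_norm_fderiv_le (𝕜 := ℂ) (fun z hz ↦ ?_)
    (fun z hz ↦ ?_) hx hy
  · exact hf.differentiableAt (isOpen_ball.mem_nhds (ball_subset_ball (by linarith) hz))
  · have hsub : ball z r ⊆ ball c (r + s) := ball_subset_ball' (by grw [mem_ball.1 hz])
    exact norm_fderiv_le_of_forall_mem_ball_norm_le hr (hf.mono hsub) fun w hw ↦ hM w (hsub hw)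

theorem norm_fderiv_sub_fderiv_le_of_forall_mem_ball_add_norm_le {f : E → F} {c : E} {r s M : ℝ}
    (hr : 0 < r) (hf : DifferentiableOn ℂ f (ball c (r + (r + s))))
    (hM : ∀ z ∈ ball c (r + (r + s)), ‖f z‖ ≤ M) {x y : E} (hx : x ∈ ball c s)
    (hy : y ∈ ball c s) : ‖fderiv ℂ f y - fderiv ℂ f x‖ ≤ 2 * (2 * M / r) / r * ‖y - x‖ := by
  have hxs : ∀ w ∈ ball x r, w ∈ ball c (r + s) := ball_subset_ball' (by grw [mem_ball.1 hx])
  have hys : ∀ w ∈ ball x r, w + (y - x) ∈ ball c (r + s) := fun w hw ↦ by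
    rw [mem_ball_iff_norm] at hw hy ⊢
    calc ‖w + (y - x) - c‖ = ‖w - x + (y - c)‖ := by congr 1; abel
      _ < r + s := (norm_add_le _ _).trans_lt (add_lt_add hw hy)
  have hdiff : ∀ z ∈ ball c (r + s), DifferentiableAt ℂ f z := fun z hz ↦
    hf.differentiableAt (isOpen_ball.mem_nhds (ball_subset_ball (by linarith) hz))
  have hshift : ∀ w ∈ ball x r, DifferentiableAt ℂ (fun w ↦ f (w + (y - x))) w := fun w hw ↦
    (differentiableAt_comp_add_right _).2 (hdiff _ (hys w hw))
  have hxr := mem_ball_self (x := x) hr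
  calc ‖fderiv ℂ f y - fderiv ℂ f x‖
      = ‖fderiv ℂ (fun w ↦ f (w + (y - x)) - f w) x‖ := by
        rw [fderiv_fun_sub (hshift x hxr) (hdiff x (hxs x hxr)), fderiv_comp_add_right,
          add_sub_cancel]
    _ ≤ 2 * (2 * M / r * ‖y - x‖) / r := by
        refine norm_fderiv_le_of_forall_mem_ball_norm_le hr
          (fun w hw ↦ ((hshift w hw).sub (hdiff w (hxs w hw))).differentiableWithinAt)
          fun w hw ↦ ?_
        simpa using norm_sub_le_of_forall_mem_ball_add_norm_le hr hf hM (hxs w hw) (hys w hw)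
    _ = 2 * (2 * M / r) / r * ‖y - x‖ := by ring

theorem exists_lipschitzOnWith_fderiv {f : E → F} {U : Set E} (hU : IsOpen U)
    (hf : DifferentiableOn ℂ f U) {c : E} (hc : c ∈ U) :
    ∃ C, ∃ V ∈ 𝓝 c, LipschitzOnWith C (fderiv ℂ f) V := by
  obtain ⟨ρ, hρ, hρU, M, hM⟩ := exists_ball_subset_forall_norm_le hU hf.continuousOn hc
  obtain ⟨r, hr, rfl⟩ : ∃ r > 0, ρ = r + (r + r) := ⟨ρ / 3, by positivity, by ring⟩
  have hM₀ : 0 ≤ M := (norm_nonneg _).trans (hM c (mem_ball_self hρ))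
  refine ⟨(2 * (2 * M / r) / r).toNNReal, ball c r, ball_mem_nhds c hr,
    LipschitzOnWith.of_dist_le_mul fun x hx y hy ↦ ?_⟩
  rw [Real.coe_toNNReal _ (by positivity), dist_eq_norm, dist_eq_norm]
  exact norm_fderiv_sub_fderiv_le_of_forall_mem_ball_add_norm_le hr (hf.mono hρU) hM hy hx

theorem continuousOn_fderiv_of_differentiableOn {f : E → F} {U : Set E} (hU : IsOpen U)
    (hf : DifferentiableOn ℂ f U) : ContinuousOn (fderiv ℂ f) U := fun c hc ↦ by
  obtain ⟨C, V, hV, hlip⟩ := exists_lipschitzOnWith_fderiv hU hf hc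
  exact (hlip.continuousOn.continuousAt hV).continuousWithinAt

theorem hasStrictFDerivAt_of_differentiableOn {f : E → F} {U : Set E} (hU : IsOpen U)
    (hf : DifferentiableOn ℂ f U) {c : E} (hc : c ∈ U) :
    HasStrictFDerivAt f (fderiv ℂ f c) c :=
  hasStrictFDerivAt_of_hasFDerivAt_of_continuousAt
    ((hU.eventually_mem hc).mono fun _ hz ↦ (hf.differentiableAt (hU.mem_nhds hz)).hasFDerivAt)
    ((continuousOn_fderiv_of_differentiableOn hU hf).continuousAt (hU.mem_nhds hc))

theorem norm_sub_sub_fderiv_le_of_lipschitzOnWith {f : E → F} {c : E} {r : ℝ} {C : ℝ≥0}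
    (hf : DifferentiableOn ℂ f (ball c r)) (hlip : LipschitzOnWith C (fderiv ℂ f) (ball c r))
    {x y : E} (hx : x ∈ ball c r) (hy : y ∈ ball c r) :
    ‖f y - f x - fderiv ℂ f x (y - x)‖ ≤ C * ‖y - x‖ ^ 2 := by
  have hsegment : segment ℝ x y ⊆ ball c r := (convex_ball c r).segment_subset hx hy
  rw [pow_two, ← mul_assoc]
  refine (convex_segment x y).norm_image_sub_le_of_norm_fderiv_le' (𝕜 := ℂ)
    (fun z hz ↦ hf.differentiableAt (isOpen_ball.mem_nhds (hsegment hz))) (fun z hz ↦ ?_)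
    (left_mem_segment ℝ x y) (right_mem_segment ℝ x y)
  refine (hlip.norm_sub_le (hsegment hz) hx).trans ?_
  gcongr
  exact norm_sub_le_of_mem_segment hz

theorem norm_inv_smul_sub_sub_fderiv_apply_le_of_lipschitzOnWith {f : E → F} {c : E} {r : ℝ}
    {C : ℝ≥0} (hf : DifferentiableOn ℂ f (ball c r))
    (hlip : LipschitzOnWith C (fderiv ℂ f) (ball c r)) {x v : E} {t : ℂ} (ht : t ≠ 0)
    (hx : x ∈ ball c r) (hxt : x + t • v ∈ ball c r) :
    ‖t⁻¹ • (f (x + t • v) - f x) - fderiv ℂ f x v‖ ≤ C * ‖v‖ ^ 2 * ‖t‖ := by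
  have htaylor := norm_sub_sub_fderiv_le_of_lipschitzOnWith hf hlip hx hxt
  rw [add_sub_cancel_left, map_smul] at htaylor
  calc ‖t⁻¹ • (f (x + t • v) - f x) - fderiv ℂ f x v‖
      = ‖t‖⁻¹ * ‖f (x + t • v) - f x - t • fderiv ℂ f x v‖ := by
        rw [← norm_inv, ← norm_smul, smul_sub t⁻¹ (_ - _), inv_smul_smul₀ ht]
    _ ≤ ‖t‖⁻¹ * (C * ‖t • v‖ ^ 2) := by gcongr
    _ = C * ‖v‖ ^ 2 * ‖t‖ := by
        have := norm_ne_zero_iff.2 ht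
        rw [norm_smul]
        field_simp

theorem uniformCauchySeqOn_fderiv_of_forall_ball_subset {ι : Type*} {l : Filter ι}
    {φ : ι → E → F} {U V : Set E} {r : ℝ} (hr : 0 < r) (hVU : ∀ x ∈ V, ball x r ⊆ U)
    (hφ : ∀ᶠ i in l, DifferentiableOn ℂ (φ i) U) (hcauchy : UniformCauchySeqOn φ l U) :
    UniformCauchySeqOn (fun i ↦ fderiv ℂ (φ i)) l V := by
  intro u hu
  obtain ⟨ε, hε, hεu⟩ := mem_uniformity_dist.1 hu
  filter_upwards [hcauchy _ (dist_mem_uniformity (by positivity : 0 < ε * r / 4)),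
    hφ.prod_mk hφ] with i hi hφi x hx
  have hball : ∀ z ∈ ball x r, U ∈ 𝓝 z := fun z hz ↦
    mem_of_superset (isOpen_ball.mem_nhds hz) (hVU x hx)
  have hdiff₁ : ∀ z ∈ ball x r, DifferentiableAt ℂ (φ i.1) z := fun z hz ↦
    hφi.1.differentiableAt (hball z hz)
  have hdiff₂ : ∀ z ∈ ball x r, DifferentiableAt ℂ (φ i.2) z := fun z hz ↦
    hφi.2.differentiableAt (hball z hz)
  have hxr := mem_ball_self (x := x) hr
  refine hεu ?_
  calc dist (fderiv ℂ (φ i.1) x) (fderiv ℂ (φ i.2) x)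
      = ‖fderiv ℂ (fun z ↦ φ i.1 z - φ i.2 z) x‖ := by
        rw [dist_eq_norm, fderiv_fun_sub (hdiff₁ x hxr) (hdiff₂ x hxr)]
    _ ≤ 2 * (ε * r / 4) / r := by
        refine norm_fderiv_le_of_forall_mem_ball_norm_le hr
          (fun z hz ↦ ((hdiff₁ z hz).sub (hdiff₂ z hz)).differentiableWithinAt) fun z hz ↦ ?_
        rw [← dist_eq_norm]
        exact (hi z (hVU x hx hz)).le
    _ < ε := by field_simp; linarith

variable [CompleteSpace F]

theorem differentiableOn_of_tendstoUniformlyOn {ι : Type*} {l : Filter ι} [l.NeBot]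
    {φ : ι → E → F} {f : E → F} {U : Set E} (hU : IsOpen U)
    (hφ : ∀ᶠ i in l, DifferentiableOn ℂ (φ i) U) (hφf : TendstoUniformlyOn φ f l U) :
    DifferentiableOn ℂ f U := by
  intro c hc
  obtain ⟨ρ, hρ, hρU⟩ := isOpen_iff.1 hU c hc
  obtain ⟨r, hr, rfl⟩ : ∃ r > 0, ρ = r + r := ⟨ρ / 2, by positivity, by ring⟩
  have hcauchy : UniformCauchySeqOn (fun i ↦ fderiv ℂ (φ i)) l (ball c r) :=
    uniformCauchySeqOn_fderiv_of_forall_ball_subset hr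
      (fun x hx ↦ (ball_subset_ball' (by grw [mem_ball.1 hx])).trans hρU)
      hφ hφf.uniformCauchySeqOn
  choose! f' hf' using fun x (hx : x ∈ ball c r) ↦
    cauchy_map_iff_exists_tendsto.1 (hcauchy.cauchy_map hx)
  have hlim := (hcauchy.tendstoUniformlyOn_of_tendsto hf').tendstoUniformlyOnFilter.mono_right
    (le_principal_iff.2 (ball_mem_nhds c hr))
  suffices HasFDerivAt f (f' c) c from this.differentiableAt.differentiableWithinAt
  refine hasFDerivAt_of_tendstoUniformlyOnFilter (f := φ) hlim ?_ ?_
  · filter_upwards [hφ.prod_mk (hU.eventually_mem hc)] with i hi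
    exact (hi.1.differentiableAt (hU.mem_nhds hi.2)).hasFDerivAt
  · filter_upwards [hU.eventually_mem hc] with x hx using hφf.tendsto_at hx

theorem differentiableOn_fderiv_apply {f : E → F} {U : Set E} (hU : IsOpen U)
    (hf : DifferentiableOn ℂ f U) (v : E) :
    DifferentiableOn ℂ (fun z ↦ fderiv ℂ f z v) U := by
  intro c hc
  obtain ⟨C, V, hV, hlip⟩ := exists_lipschitzOnWith_fderiv hU hf hc
  obtain ⟨ρ, hρ, hρUV⟩ := Metric.mem_nhds_iff.1 (inter_mem (hU.mem_nhds hc) hV)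
  obtain ⟨r, hr, rfl⟩ : ∃ r > 0, ρ = r + r := ⟨ρ / 2, by positivity, by ring⟩
  have hfball : DifferentiableOn ℂ f (ball c (r + r)) := hf.mono (hρUV.trans inter_subset_left)
  have hsub : ball c r ⊆ ball c (r + r) := ball_subset_ball (by linarith)
  have hshift : ∀ᶠ t : ℂ in 𝓝[≠] 0, ∀ z ∈ ball c r, z + t • v ∈ ball c (r + r) := by
    have hsmall : Tendsto (fun t : ℂ ↦ t • v) (𝓝[≠] 0) (𝓝 0) :=
      (by fun_prop : Continuous fun t : ℂ ↦ t • v).tendsto' 0 0 (zero_smul ℂ v)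
        |>.mono_left nhdsWithin_le_nhds
    filter_upwards [hsmall (ball_mem_nhds 0 hr)] with t ht z hz
    rw [mem_preimage, mem_ball_zero_iff] at ht
    rw [mem_ball_iff_norm] at hz ⊢
    rw [add_sub_right_comm]
    exact (norm_add_le _ _).trans_lt (add_lt_add hz ht)
  suffices DifferentiableOn ℂ (fun z ↦ fderiv ℂ f z v) (ball c r) from
    (this.differentiableAt (ball_mem_nhds c hr)).differentiableWithinAt
  refine differentiableOn_of_tendstoUniformlyOn (l := 𝓝[≠] (0 : ℂ))
    (φ := fun t z ↦ t⁻¹ • (f (z + t • v) - f z)) isOpen_ball ?_ ?_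
  · filter_upwards [hshift] with t ht
    exact ((hfball.comp (by fun_prop) ht).sub (hfball.mono hsub)).const_smul _
  · refine tendstoUniformlyOn_iff.2 fun ε hε ↦ ?_
    have hzero : Tendsto (fun t : ℂ ↦ C * ‖v‖ ^ 2 * ‖t‖) (𝓝[≠] 0) (𝓝 0) :=
      (by fun_prop : Continuous fun t : ℂ ↦ C * ‖v‖ ^ 2 * ‖t‖).tendsto' 0 0 (by simp)
        |>.mono_left nhdsWithin_le_nhds
    filter_upwards [hshift, hzero.eventually_lt_const hε, self_mem_nhdsWithin]
      with t ht hlt ht₀ z hz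
    rw [dist_comm, dist_eq_norm]
    exact (norm_inv_smul_sub_sub_fderiv_apply_le_of_lipschitzOnWith hfball
      (hlip.mono (hρUV.trans inter_subset_right)) ht₀ (hsub hz) (ht z hz)).trans_lt hlt

end Holomorphic

theorem encard_fiber_mkQ_span_singleton_le {R M : Type*} [Ring R] [AddCommGroup M] [Module R M]
    {A : Set M} {v : M} {N : ℕ∞} (hA : ∀ x ∈ A, {t : R | x + t • v ∈ A}.encard ≤ N)
    (p : M ⧸ (R ∙ v)) : {x ∈ A | (R ∙ v).mkQ x = p}.encard ≤ N := by
  obtain hempty | ⟨x, hx, rfl⟩ := {x ∈ A | (R ∙ v).mkQ x = p}.eq_empty_or_nonempty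
  · rw [hempty, encard_empty]
    exact zero_le
  refine (encard_le_encard ?_).trans ((encard_image_le (fun t ↦ x + t • v) _).trans (hA x hx))
  rintro y ⟨hy, hyx⟩
  rw [Submodule.mkQ_apply, Submodule.mkQ_apply, Submodule.Quotient.eq,
    Submodule.mem_span_singleton] at hyx
  obtain ⟨t, ht⟩ := hyx
  have hxy : x + t • v = y := by rw [ht, add_sub_cancel]
  exact ⟨t, by rwa [mem_ofPred_eq, hxy], hxy⟩

section ZeroCounting

variable {F : Type*} [NormedAddCommGroup F] [NormedSpace ℂ F] [CompleteSpace F]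
  {h : ℂ → F} {U : Set ℂ}

theorem diffContOnCl_dslope {a : ℂ} (hU : IsOpen U) (hh : DiffContOnCl ℂ h U)
    (ha : a ∈ U) : DiffContOnCl ℂ (dslope h a) U where
  differentiableOn :=
    (Complex.differentiableOn_dslope (hU.mem_nhds ha)).2 hh.differentiableOn
  continuousOn := (continuousOn_dslope (mem_of_superset (hU.mem_nhds ha) subset_closure)).2
    ⟨hh.continuousOn, hh.differentiableAt hU ha⟩

theorem exists_eq_prod_sub_smul (hU : IsOpen U) (hh : DiffContOnCl ℂ h U) (S : Finset ℂ)
    (hSU : ↑S ⊆ U) (hS : ∀ a ∈ S, h a = 0) :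
    ∃ g : ℂ → F, DiffContOnCl ℂ g U ∧ ∀ z, h z = (∏ a ∈ S, (z - a)) • g z := by
  induction S using Finset.induction_on with
  | empty => exact ⟨h, hh, by simp⟩
  | insert a S haS ih =>
    simp only [Finset.coe_insert, insert_subset_iff, Finset.forall_mem_insert] at hSU hS
    obtain ⟨g, hg, hgh⟩ := ih hSU.2 hS.2
    have hga : g a = 0 := by
      refine (smul_eq_zero.1 ((hgh a).symm.trans hS.1)).resolve_left ?_
      exact Finset.prod_ne_zero_iff.2 fun b hb ↦ sub_ne_zero.2 fun hab ↦ haS (hab ▸ hb)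
    refine ⟨dslope g a, diffContOnCl_dslope hU hg hSU.1, fun z ↦ ?_⟩
    rw [Finset.prod_insert haS, mul_comm, mul_smul, sub_smul_dslope, hga, sub_zero, hgh]

theorem norm_le_pow_card_mul_of_forall_mem_frontier (hU : IsOpen U) (hUb : Bornology.IsBounded U)
    (hh : DiffContOnCl ℂ h U) {M : ℝ} (hM : ∀ z ∈ frontier U, ‖h z‖ ≤ M) {w : ℂ} (hw : w ∈ U)
    {q : ℝ≥0} (S : Finset ℂ) (hSU : ↑S ⊆ U) (hS : ∀ a ∈ S, h a = 0)
    (hq : ∀ a ∈ S, ∀ z ∈ frontier U, ‖w - a‖ ≤ q * ‖z - a‖) :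
    ‖h w‖ ≤ q ^ S.card * M := by
  obtain ⟨g, hg, hgh⟩ := exists_eq_prod_sub_smul hU hh S hSU hS
  rw [hgh w]
  -- Maximum principle for `g` scaled by the constant `∏ (w - a)`, so that `q` compares the factors.
  refine Complex.norm_le_of_forall_mem_frontier_norm_le hUb
    (hg.const_smul (∏ a ∈ S, (w - a))) (fun z hz ↦ ?_) (subset_closure hw)
  calc ‖(∏ a ∈ S, (w - a)) • g z‖ = (∏ a ∈ S, ‖w - a‖) * ‖g z‖ := by rw [norm_smul, norm_prod]
    _ ≤ (∏ a ∈ S, q * ‖z - a‖) * ‖g z‖ := by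
      gcongr with a ha
      exact hq a ha z hz
    _ = q ^ S.card * ‖h z‖ := by
      rw [Finset.prod_mul_distrib, Finset.prod_const, mul_assoc, ← norm_prod, ← norm_smul, ← hgh]
    _ ≤ q ^ S.card * M := by
      gcongr
      exact hM z hz

theorem encard_zeros_le_of_lt_mul_two_pow (hh : DiffContOnCl ℂ h (ball 0 3)) {M : ℝ} {N : ℕ}
    (hM : ∀ t ∈ sphere (0 : ℂ) 3, ‖h t‖ ≤ M) (hN : M < ‖h 1‖ * 2 ^ N) :
    {t ∈ closedBall 0 (1 / 3) | h t = 0}.encard ≤ N := by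
  by_contra! hlt
  obtain ⟨S, hS, hScard⟩ := exists_subset_encard_eq hlt.le
  lift S to Finset ℂ using finite_of_encard_eq_coe hScard
  rw [encard_coe_eq_coe_finsetCard, Nat.cast_inj] at hScard
  have hS' : ∀ a ∈ S, ‖a‖ ≤ 1 / 3 := fun a ha ↦ mem_closedBall_zero_iff.1 (hS ha).1
  have hfrontier : frontier (ball (0 : ℂ) 3) = sphere 0 3 := frontier_ball 0 (by norm_num)
  refine hN.not_ge ?_
  -- The factor `2⁻¹` is `‖1 - a‖ / ‖z - a‖ ≤ (4 / 3) / (8 / 3)`.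
  have hle : ‖h 1‖ ≤ (2⁻¹ : ℝ≥0) ^ S.card * M := by
    refine norm_le_pow_card_mul_of_forall_mem_frontier isOpen_ball isBounded_ball hh
      (by rwa [hfrontier]) (by simp) S (fun a ha ↦ ?_) (fun a ha ↦ (hS ha).2) fun a ha z hz ↦ ?_
    · rw [mem_ball_zero_iff]
      linarith [hS' a ha]
    · rw [hfrontier, mem_sphere_zero_iff_norm] at hz
      have h₁ := norm_sub_le 1 a
      have h₂ := norm_sub_norm_le z a
      rw [norm_one] at h₁
      push_cast
      linarith [hS' a ha]
  rw [hScard, NNReal.coe_inv, inv_pow, inv_mul_eq_div, le_div_iff₀ (by positivity)] at hle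
  exact_mod_cast hle

variable {E : Type*} [NormedAddCommGroup E] [NormedSpace ℂ E]

theorem exists_encard_zeros_inter_fiber_mkQ_le {f : E → F} {z₀ v : E} {r M : ℝ} (hv : v ≠ 0)
    (hvr : 4 * ‖v‖ ≤ r) (hf : DifferentiableOn ℂ f (ball z₀ r))
    (hM : ∀ z ∈ ball z₀ r, ‖f z‖ ≤ M) (hfv : f (z₀ + v) ≠ 0) :
    ∃ V ∈ 𝓝 z₀, ∃ N : ℕ, ∀ p, {y ∈ V ∩ {z | f z = 0} | (ℂ ∙ v).mkQ y = p}.encard ≤ N := by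
  have hv₀ : 0 < ‖v‖ := norm_pos_iff.2 hv
  have hcont : ContinuousAt (fun x ↦ f (x + v)) z₀ :=
    (hf.differentiableAt (isOpen_ball.mem_nhds (by simp; linarith))).continuousAt.comp
      (f := fun x ↦ x + v) (by fun_prop)
  obtain ⟨N, hN⟩ : ∃ N : ℕ, M < ‖f (z₀ + v)‖ * 2 ^ N := by
    obtain ⟨N, hN⟩ := pow_unbounded_of_one_lt (M / ‖f (z₀ + v)‖) one_lt_two
    exact ⟨N, (div_lt_iff₀' (norm_pos_iff.2 hfv)).1 hN⟩
  have hev : ∀ᶠ x in 𝓝 z₀, M < ‖f (x + v)‖ * 2 ^ N :=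
    (hcont.norm.mul_const _).eventually_const_lt hN
  refine ⟨_, inter_mem (ball_mem_nhds z₀ (by positivity : 0 < ‖v‖ / 6)) hev, N,
    encard_fiber_mkQ_span_singleton_le fun x hx ↦ ?_⟩
  have hline : ∀ t ∈ closedBall (0 : ℂ) 3, x + t • v ∈ ball z₀ r := fun t ht ↦ by
    have hxz : ‖x - z₀‖ < ‖v‖ / 6 := mem_ball_iff_norm.1 hx.1.1
    have htv : ‖t • v‖ ≤ 3 * ‖v‖ := by grw [norm_smul, mem_closedBall_zero_iff.1 ht]
    rw [mem_ball_iff_norm, add_sub_right_comm]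
    linarith [norm_add_le (x - z₀) (t • v)]
  have hh : DifferentiableOn ℂ (fun t : ℂ ↦ f (x + t • v)) (closedBall 0 3) :=
    hf.comp (by fun_prop) hline
  refine (encard_le_encard fun t ht ↦ ?_).trans (encard_zeros_le_of_lt_mul_two_pow
    (M := M) (N := N) (hh.mono closure_ball_subset_closedBall).diffContOnCl
    (fun t ht ↦ hM _ (hline t (sphere_subset_closedBall ht))) (by simpa using hx.1.2))
  refine ⟨?_, ht.2⟩
  have hdist : dist (x + t • v) x < ‖v‖ / 6 + ‖v‖ / 6 :=
    (dist_triangle_right _ _ z₀).trans_lt (add_lt_add ht.1.1 hx.1.1)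
  rw [dist_self_add_left, norm_smul] at hdist
  rw [mem_closedBall_zero_iff]
  nlinarith

end ZeroCounting

section Multiplicity

theorem tsum_measure_le_mul_measure_iUnion {X ι : Type*} [MeasurableSpace X] [Countable ι]
    (μ : Measure X) {s : ι → Set X} (hs : ∀ i, MeasurableSet (s i)) {N : ℕ∞}
    (hN : ∀ x, {i | x ∈ s i}.encard ≤ N) : ∑' i, μ (s i) ≤ N * μ (⋃ i, s i) := by
  have hcount : ∀ x, ∑' i, (s i).indicator (1 : X → ℝ≥0∞) x = {i | x ∈ s i}.encard := fun x ↦ by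
    rw [← ENNReal.tsum_set_one, tsum_subtype {i | x ∈ s i} fun _ ↦ 1]
    rfl
  calc ∑' i, μ (s i) = ∫⁻ x, ∑' i, (s i).indicator 1 x ∂μ := by
        rw [lintegral_tsum fun i ↦ (measurable_one.indicator (hs i)).aemeasurable]
        simp_rw [lintegral_indicator_one (hs _)]
    _ ≤ ∫⁻ x, (⋃ i, s i).indicator (fun _ ↦ (N : ℝ≥0∞)) x ∂μ := by
        refine lintegral_mono fun x ↦ ?_
        rw [hcount]
        by_cases hx : x ∈ ⋃ i, s i
        · rw [indicator_of_mem hx]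
          exact ENat.toENNReal_mono (hN x)
        · have hempty : {i | x ∈ s i} = ∅ := by simpa [eq_empty_iff_forall_notMem] using hx
          simp [hempty]
    _ = N * μ (⋃ i, s i) := lintegral_indicator_const (.iUnion hs) _

theorem exists_measurable_pairwise_disjoint_iUnion_eq {X : Type*} [TopologicalSpace X]
    [SecondCountableTopology X] [MeasurableSpace X] [OpensMeasurableSpace X] {A : Set X}
    (hA : MeasurableSet A) {P : Set X → Prop} (hempty : P ∅)
    (hmono : ∀ ⦃s t⦄, s ⊆ t → P t → P s) (hP : ∀ x ∈ A, ∃ s ∈ 𝓝[A] x, P s) :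
    ∃ B : ℕ → Set X, (∀ k, MeasurableSet (B k)) ∧ Pairwise (Function.onFun Disjoint B) ∧
      ⋃ k, B k = A ∧ ∀ k, P (B k) := by
  have hopen : ∀ x ∈ A, ∃ u, IsOpen u ∧ x ∈ u ∧ P (u ∩ A) := fun x hx ↦ by
    obtain ⟨s, hs, hPs⟩ := hP x hx
    obtain ⟨u, hu, hxu, hus⟩ := mem_nhdsWithin.1 hs
    exact ⟨u, hu, hxu, hmono hus hPs⟩
  choose! u hu hxu hPu using hopen
  obtain ⟨T, hTA, hT, hcover⟩ := TopologicalSpace.countable_cover_nhdsWithin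
    fun x hx ↦ mem_nhdsWithin_of_mem_nhds ((hu x hx).mem_nhds (hxu x hx))
  obtain rfl | hTne := T.eq_empty_or_nonempty
  · refine ⟨fun _ ↦ ∅, fun _ ↦ .empty, fun _ _ _ ↦ disjoint_empty _, ?_, fun _ ↦ hempty⟩
    simpa [eq_comm, subset_empty_iff] using hcover
  obtain ⟨x, rfl⟩ := hT.exists_eq_range hTne
  rw [range_subset_iff] at hTA
  rw [biUnion_range] at hcover
  refine ⟨fun k ↦ disjointed (u ∘ x) k ∩ A, fun k ↦ .inter
    (.disjointed (fun k ↦ (hu _ (hTA k)).measurableSet) k) hA, fun i j hij ↦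
    (disjoint_disjointed _ hij).mono inter_subset_left inter_subset_left, ?_, fun k ↦
    hmono (inter_subset_inter_left A (disjointed_subset _ k)) (hPu _ (hTA k))⟩
  rw [← iUnion_inter, iUnion_disjointed, inter_eq_right]
  exact hcover

variable {X Y : Type*} [EMetricSpace X] [MeasurableSpace X] [BorelSpace X]
  [EMetricSpace Y] [MeasurableSpace Y] [BorelSpace Y] {p : X → Y} {A : Set X} {C : ℝ≥0} {d : ℝ}

theorem hausdorffMeasure_le_of_antilipschitzWith_domRestrict (hd : 0 ≤ d)
    (hp : AntilipschitzWith C (A.domRestrict p)) : μH[d] A ≤ C ^ d * μH[d] (p '' A) := by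
  have hle := hp.le_hausdorffMeasure_image hd univ
  rwa [image_univ, range_domRestrict, ← isometry_subtype_coe.hausdorffMeasure_image (.inl hd),
    image_univ, Subtype.range_coe] at hle

theorem hausdorffMeasure_le_of_encard_fiber_le [PolishSpace X] {N : ℕ∞} (hd : 0 ≤ d)
    (hA : MeasurableSet A) (hp : ContinuousOn p A)
    (hloc : ∀ x ∈ A, ∃ s ∈ 𝓝[A] x, AntilipschitzWith C (s.domRestrict p))
    (hN : ∀ y, {x ∈ A | p x = y}.encard ≤ N) :
    μH[d] A ≤ C ^ d * (N * μH[d] (p '' A)) := by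
  obtain ⟨B, hB, hdisj, rfl, hanti⟩ := exists_measurable_pairwise_disjoint_iUnion_eq hA
    (P := fun s ↦ AntilipschitzWith C (s.domRestrict p)) (fun x ↦ x.2.elim)
    (fun s t hst ht x y ↦ ht ⟨x, hst x.2⟩ ⟨y, hst y.2⟩) hloc
  have himage : ∀ k, MeasurableSet (p '' B k) := fun k ↦ (hB k).image_of_continuousOn_injOn
    (hp.mono (subset_iUnion B k)) (injOn_iff_injective.2 (hanti k).injective)
  have hmult : ∀ y, {k | y ∈ p '' B k}.encard ≤ N := fun y ↦ by
    choose! index hindex using fun x (hx : x ∈ ⋃ k, B k) ↦ mem_iUnion.1 hx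
    refine (encard_le_encard ?_).trans ((encard_image_le index _).trans (hN y))
    rintro k ⟨x, hxk, hxy⟩
    have hx : x ∈ ⋃ k, B k := mem_iUnion_of_mem k hxk
    exact ⟨x, ⟨hx, hxy⟩, hdisj.eq (not_disjoint_iff.2 ⟨x, hindex x hx, hxk⟩)⟩
  calc μH[d] (⋃ k, B k) ≤ ∑' k, μH[d] (B k) := measure_iUnion_le B
    _ ≤ ∑' k, C ^ d * μH[d] (p '' B k) :=
      ENNReal.tsum_le_tsum fun k ↦ hausdorffMeasure_le_of_antilipschitzWith_domRestrict hd (hanti k)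
    _ = C ^ d * ∑' k, μH[d] (p '' B k) := ENNReal.tsum_mul_left
    _ ≤ C ^ d * (N * μH[d] (p '' ⋃ k, B k)) := by
      rw [image_iUnion]
      gcongr
      exact tsum_measure_le_mul_measure_iUnion _ himage hmult

end Multiplicity

section Quotient

variable {𝕜 E F : Type*} [NontriviallyNormedField 𝕜] [NormedAddCommGroup E] [NormedSpace 𝕜 E]
  [NormedAddCommGroup F] [NormedSpace 𝕜 F] {L : E →L[𝕜] F} {v : E} {K : ℝ≥0}

theorem opNorm_mul_norm_le_of_opNorm_le_mul_norm_apply (hLv : ‖L‖ ≤ K * ‖L v‖) (u : E) :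
    ‖L‖ * ‖u‖ ≤ (1 + K * ‖v‖) * (‖L‖ * ‖(𝕜 ∙ v).mkQ u‖ + ‖L u‖) := by
  refine le_of_forall_pos_le_add fun ε hε ↦ ?_
  have hδ : 0 < ε / ((1 + K * ‖v‖) * (‖L‖ + 1)) := by positivity
  obtain ⟨w, hwu, hw⟩ := Submodule.Quotient.norm_mk_lt ((𝕜 ∙ v).mkQ u) hδ
  obtain ⟨s, hs⟩ := Submodule.mem_span_singleton.1 ((Submodule.Quotient.eq _).1 hwu.symm)
  have hu : u = s • v + w := by rw [hs, sub_add_cancel]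
  have hsLv : ‖s‖ * ‖L v‖ ≤ ‖L u‖ + ‖L‖ * ‖w‖ := by
    rw [← norm_smul, ← map_smul, hs, map_sub]
    exact (norm_sub_le _ _).trans (by grw [L.le_opNorm w])
  calc ‖L‖ * ‖u‖ ≤ ‖L‖ * (‖s‖ * ‖v‖ + ‖w‖) := by
        grw [hu, norm_add_le, norm_smul]
    _ ≤ K * ‖v‖ * (‖s‖ * ‖L v‖) + ‖L‖ * ‖w‖ := by
        linear_combination (‖s‖ * ‖v‖) * hLv
    _ ≤ K * ‖v‖ * (‖L u‖ + ‖L‖ * ‖w‖) + ‖L‖ * ‖w‖ := by grw [hsLv]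
    _ ≤ (1 + K * ‖v‖) * (‖L‖ * ‖w‖ + ‖L u‖) := by linarith [norm_nonneg (L u)]
    _ ≤ _ := by
        have hδε : (1 + K * ‖v‖) * ‖L‖ * (ε / ((1 + K * ‖v‖) * (‖L‖ + 1))) ≤ ε := by
          rw [mul_div_assoc', div_le_iff₀ (by positivity)]
          nlinarith [show 0 ≤ (1 + K * ‖v‖) * ε by positivity]
        grw [hw]
        linarith

theorem exists_antilipschitzWith_mkQ_of_hasStrictFDerivAt {f : E → F} {z : E}
    (hf : HasStrictFDerivAt f L z) (hL : L ≠ 0) (hLv : ‖L‖ ≤ K * ‖L v‖) :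
    ∃ s ∈ 𝓝[{x | f x = f z}] z,
      AntilipschitzWith (2 * (1 + K * ‖v‖₊)) (s.domRestrict (𝕜 ∙ v).mkQ) := by
  have hL₀ : 0 < ‖L‖ := norm_pos_iff.2 hL
  obtain ⟨s, hs, hzs, hbound⟩ := exists_nhds_square
    (hf.isLittleO.def (by positivity : 0 < ‖L‖ / (2 * (1 + K * ‖v‖))))
  refine ⟨_, inter_mem_nhdsWithin _ (hs.mem_nhds hzs),
    AntilipschitzWith.of_le_mul_dist fun x y ↦ ?_⟩
  have hLxy := hbound (mk_mem_prod x.2.2 y.2.2)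
  have hfxy : f x = f y := x.2.1.trans y.2.1.symm
  rw [mem_ofPred_eq, hfxy, sub_self, zero_sub, norm_neg] at hLxy
  have hle := opNorm_mul_norm_le_of_opNorm_le_mul_norm_apply hLv (x - y : E)
  rw [Subtype.dist_eq, dist_eq_norm, dist_eq_norm, domRestrict_apply, domRestrict_apply, ← map_sub]
  refine le_of_mul_le_mul_left ?_ hL₀
  have hhalf : (1 + K * ‖v‖) * ‖L (x - y : E)‖ ≤ ‖L‖ * ‖(x - y : E)‖ / 2 := by
    grw [hLxy]
    field_simp
    rfl
  push_cast
  linarith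

theorem exists_finite_subset_forall_opNorm_le [CompleteSpace 𝕜] [FiniteDimensional 𝕜 E] {W : Set E}
    (hW : (interior W).Nonempty) : ∃ S ⊆ W, S.Finite ∧ ∃ K : ℝ≥0,
      ∀ L : E →L[𝕜] F, L ≠ 0 → ∃ v ∈ S, ‖L‖ ≤ K * ‖L v‖ := by
  have hspan : ⊤ ≤ Submodule.span 𝕜 W :=
    (Submodule.eq_top_of_nonempty_interior' _ (hW.mono (interior_mono Submodule.subset_span))).ge
  let b := Module.Basis.ofSpan hspan
  obtain ⟨C, hC, hbC⟩ := b.exists_opNorm_le (F := F)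
  refine ⟨range b, Module.Basis.ofSpan_subset hspan, finite_range b, (2 * C).toNNReal,
    fun L hL ↦ ?_⟩
  have hL₀ : 0 < ‖L‖ := norm_pos_iff.2 hL
  by_contra! hlt
  rw [Real.coe_toNNReal _ (by positivity), forall_mem_range] at hlt
  have hle : ‖L‖ ≤ C * (‖L‖ / (2 * C)) :=
    hbC (by positivity) fun i ↦ ((lt_div_iff₀' (by positivity)).2 (hlt i)).le
  have : C * (‖L‖ / (2 * C)) = ‖L‖ / 2 := by field_simp
  linarith

end Quotient

section HausdorffFinite

theorem finiteAtFilter_nhdsWithin_biUnion {X ι : Type*} [TopologicalSpace X] [MeasurableSpace X]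
    {μ : Measure X} {x : X} {S : Set ι} (hS : S.Finite) {A : ι → Set X}
    (hA : ∀ i ∈ S, μ.FiniteAtFilter (𝓝[A i] x)) : μ.FiniteAtFilter (𝓝[⋃ i ∈ S, A i] x) := by
  induction S, hS using Set.Finite.induction_on with
  | empty => simpa using μ.finiteAtBot
  | insert _ _ ih =>
    rw [biUnion_insert, nhdsWithin_union]
    rw [forall_mem_insert] at hA
    exact hA.1.filterSup (ih hA.2)

variable {E F : Type*} [NormedAddCommGroup E] [NormedSpace ℂ E] [MeasurableSpace E] [BorelSpace E]
  [NormedAddCommGroup F] [NormedSpace ℂ F]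

/-- The zeros of `f` at which `f` is regular and the direction `v` is transverse to the zero set,
quantitatively: the derivative along `v` is, up to the factor `K`, as large as along any direction.
Near such zeros, projecting along `v` does not contract the zero set by more than a factor depending
on `K` and `v`. -/
def transverseZeros (f : E → F) (v : E) (K : ℝ≥0) : Set E :=
  {z | f z = 0 ∧ fderiv ℂ f z ≠ 0 ∧ ‖fderiv ℂ f z‖ ≤ K * ‖fderiv ℂ f z v‖}

theorem measurableSet_inter_transverseZeros {f : E → F} {U : Set E} (hU : IsOpen U)
    (hf : DifferentiableOn ℂ f U) (v : E) (K : ℝ≥0) :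
    MeasurableSet (U ∩ transverseZeros f v K) := by
  have hf₀ : Continuous (U.domRestrict f) := hf.continuousOn.domRestrict
  have hf₁ : Continuous (U.domRestrict (fderiv ℂ f)) :=
    (continuousOn_fderiv_of_differentiableOn hU hf).domRestrict
  rw [← Subtype.image_preimage_coe]
  refine hU.measurableSet.subtype_image ?_
  refine (isClosed_eq hf₀ continuous_const).measurableSet.inter
    ((isOpen_ne_fun hf₁ continuous_const).measurableSet.inter
      (isClosed_le hf₁.norm ?_).measurableSet)
  exact continuous_const.mul (hf₁.clm_apply continuous_const).norm

variable [FiniteDimensional ℂ E]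

theorem hausdorffMeasure_two_mul_finrank_lt_top {A : Set E} (hA : Bornology.IsBounded A) :
    μH[2 * (Module.finrank ℂ E : ℝ)] A < ⊤ := by
  have hfinrank : (Module.finrank ℝ E : ℝ) = 2 * Module.finrank ℂ E := by
    exact_mod_cast finrank_real_of_complex E
  rw [← hfinrank]
  have := FiniteDimensional.complexToReal E
  exact hA.measure_lt_top

theorem hausdorffMeasure_transverseZeros_inter_lt_top {f : E → F} {v : E} (hv : v ≠ 0) {W : Set E}
    (hW : IsOpen W) (hWb : Bornology.IsBounded W) (hf : DifferentiableOn ℂ f W) {N : ℕ}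
    (hN : ∀ p, {z ∈ W ∩ {z | f z = 0} | (ℂ ∙ v).mkQ z = p}.encard ≤ N) (K : ℝ≥0) :
    μH[2 * (Module.finrank ℂ E : ℝ) - 2] (W ∩ transverseZeros f v K) < ⊤ := by
  have hclosed : IsClosed ((ℂ ∙ v : Submodule ℂ E) : Set E) :=
    Submodule.closed_of_finiteDimensional _
  have : ProperSpace E := FiniteDimensional.proper ℂ E
  let : MeasurableSpace (E ⧸ (ℂ ∙ v)) := borel _
  have : BorelSpace (E ⧸ (ℂ ∙ v)) := ⟨rfl⟩
  have hfinrank : 2 * (Module.finrank ℂ E : ℝ) - 2 = 2 * Module.finrank ℂ (E ⧸ (ℂ ∙ v)) := by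
    rw [← Submodule.finrank_quotient_add_finrank (ℂ ∙ v), finrank_span_singleton hv]
    push_cast
    ring
  have hd : 0 ≤ 2 * (Module.finrank ℂ (E ⧸ (ℂ ∙ v)) : ℝ) := by positivity
  have hzeros : W ∩ transverseZeros f v K ⊆ W ∩ {z | f z = 0} :=
    inter_subset_inter_right W fun z hz ↦ hz.1
  have himage : Bornology.IsBounded ((ℂ ∙ v).mkQ '' (W ∩ transverseZeros f v K)) :=
    (ℂ ∙ v).mkQL.lipschitz.isBounded_image (hWb.subset inter_subset_left)
  have hfiber : ∀ p, {z ∈ W ∩ transverseZeros f v K | (ℂ ∙ v).mkQ z = p}.encard ≤ N := fun p ↦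
    (encard_le_encard (inter_subset_inter_left _ hzeros)).trans (hN p)
  rw [hfinrank]
  refine (hausdorffMeasure_le_of_encard_fiber_le (C := 2 * (1 + K * ‖v‖₊)) hd
    (measurableSet_inter_transverseZeros hW hf v K) (ℂ ∙ v).mkQL.continuous.continuousOn
    (fun z hz ↦ ?_) hfiber).trans_lt
    (ENNReal.mul_lt_top (ENNReal.rpow_lt_top_of_nonneg hd ENNReal.coe_ne_top)
      (ENNReal.mul_lt_top (by simp) (hausdorffMeasure_two_mul_finrank_lt_top himage)))
  obtain ⟨hzW, hfz, hregular, hle⟩ := hz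
  obtain ⟨s, hs, hanti⟩ := exists_antilipschitzWith_mkQ_of_hasStrictFDerivAt
    (hasStrictFDerivAt_of_differentiableOn hW hf hzW) hregular hle
  exact ⟨s, nhdsWithin_mono z (fun x hx ↦ (hzeros hx).2.trans hfz.symm) hs, hanti⟩

variable [CompleteSpace F]

theorem finiteAtFilter_nhdsWithin_transverseZeros {f : E → F} {z₀ v : E} {r M : ℝ} (hv : v ≠ 0)
    (hvr : 4 * ‖v‖ ≤ r) (hf : DifferentiableOn ℂ f (ball z₀ r))
    (hM : ∀ z ∈ ball z₀ r, ‖f z‖ ≤ M) (hfv : f (z₀ + v) ≠ 0) (K : ℝ≥0) :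
    μH[2 * (Module.finrank ℂ E : ℝ) - 2].FiniteAtFilter (𝓝[transverseZeros f v K] z₀) := by
  have hr : 0 < r := by linarith [norm_pos_iff.2 hv]
  obtain ⟨V, hV, N, hN⟩ := exists_encard_zeros_inter_fiber_mkQ_le hv hvr hf hM hfv
  obtain ⟨W, hWV, hW, hzW⟩ := _root_.mem_nhds_iff.1 (inter_mem hV (ball_mem_nhds z₀ hr))
  rw [subset_inter_iff] at hWV
  refine ⟨W ∩ transverseZeros f v K,
    inter_mem (mem_nhdsWithin_of_mem_nhds (hW.mem_nhds hzW)) self_mem_nhdsWithin, ?_⟩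
  exact hausdorffMeasure_transverseZeros_inter_lt_top hv hW (isBounded_ball.subset hWV.2)
    (hf.mono hWV.2) (fun p ↦ (encard_le_encard (inter_subset_inter_left _
      (inter_subset_inter_left _ hWV.1))).trans (hN p)) K

theorem finiteAtFilter_nhdsWithin_regularZeros {f : E → F} {U : Set E} (hU : IsOpen U)
    (hf : DifferentiableOn ℂ f U) {z₀ : E} (hz₀ : z₀ ∈ U) (hfz₀ : f z₀ = 0)
    (hnv : ∃ᶠ z in 𝓝 z₀, f z ≠ 0) :
    μH[2 * (Module.finrank ℂ E : ℝ) - 2].FiniteAtFilter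
      (𝓝[{z | f z = 0 ∧ fderiv ℂ f z ≠ 0}] z₀) := by
  obtain ⟨r, hr, hrU, M, hM⟩ := exists_ball_subset_forall_norm_le hU hf.continuousOn hz₀
  have hfr : DifferentiableOn ℂ f (ball z₀ r) := hf.mono hrU
  have hopen : IsOpen (ball z₀ (r / 4) ∩ f ⁻¹' {0}ᶜ) :=
    (hfr.continuousOn.mono (ball_subset_ball (by linarith))).isOpen_inter_preimage isOpen_ball
      isOpen_compl_singleton
  obtain ⟨w, hfw, hw⟩ := (hnv.and_eventually (ball_mem_nhds z₀ (by positivity : 0 < r / 4))).exists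
  obtain ⟨u, rfl⟩ : ∃ u, w = z₀ + u := ⟨w - z₀, (add_sub_cancel z₀ w).symm⟩
  have hinterior : (interior ((z₀ + ·) ⁻¹' (ball z₀ (r / 4) ∩ f ⁻¹' {0}ᶜ))).Nonempty := by
    rw [(hopen.preimage (by fun_prop)).interior_eq]
    exact ⟨u, hw, hfw⟩
  obtain ⟨S, hSW, hS, K, hK⟩ := exists_finite_subset_forall_opNorm_le (F := F) (𝕜 := ℂ) hinterior
  have hcover : {z | f z = 0 ∧ fderiv ℂ f z ≠ 0} ⊆ ⋃ v ∈ S, transverseZeros f v K := by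
    rintro z ⟨hfz, hregular⟩
    obtain ⟨v, hv, hle⟩ := hK _ hregular
    exact mem_biUnion hv ⟨hfz, hregular, hle⟩
  refine .filter_mono (nhdsWithin_mono z₀ hcover)
    (finiteAtFilter_nhdsWithin_biUnion hS fun v hv ↦ ?_)
  obtain ⟨hvr, hfv⟩ := hSW hv
  rw [mem_ball, dist_self_add_left] at hvr
  refine finiteAtFilter_nhdsWithin_transverseZeros ?_ (by linarith) hfr hM hfv K
  rintro rfl
  exact hfv (by simpa using hfz₀)

end HausdorffFinite

section Order

variable {E F : Type*} [NormedAddCommGroup E] [NormedSpace ℂ E]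
  [NormedAddCommGroup F] [NormedSpace ℂ F] {f : E → F} {U : Set E} {z₀ : E}

theorem frequently_ne_zero_of_analyticOrderAt_comp_line_ne_top {v : E}
    (h : analyticOrderAt (fun t : ℂ ↦ f (z₀ + t • v)) 0 ≠ ⊤) : ∃ᶠ z in 𝓝 z₀, f z ≠ 0 := by
  have hline : Tendsto (fun t : ℂ ↦ z₀ + t • v) (𝓝 0) (𝓝 z₀) :=
    (by fun_prop : Continuous fun t : ℂ ↦ z₀ + t • v).tendsto' 0 z₀ (by simp)
  rw [Ne, analyticOrderAt_eq_top] at h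
  exact hline.frequently (not_eventually.1 h)

variable [CompleteSpace F]

theorem analyticOnNhd_comp_line (hU : IsOpen U) (hf : DifferentiableOn ℂ f U) (z₀ v : E) :
    AnalyticOnNhd ℂ (fun t : ℂ ↦ f (z₀ + t • v)) ((fun t : ℂ ↦ z₀ + t • v) ⁻¹' U) :=
  DifferentiableOn.analyticOnNhd (hf.comp (by fun_prop) fun _ ht ↦ ht)
    (hU.preimage (by fun_prop))

theorem analyticOrderAt_comp_line_ne_top {v : E} (hU : IsOpen U) (hUc : Convex ℝ U)
    (hf : DifferentiableOn ℂ f U) (hz₀ : z₀ ∈ U) (hv : z₀ + v ∈ U) (hfv : f (z₀ + v) ≠ 0) :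
    analyticOrderAt (fun t : ℂ ↦ f (z₀ + t • v)) 0 ≠ ⊤ := fun htop ↦ by
  have hconvex : Convex ℝ ((fun t : ℂ ↦ z₀ + t • v) ⁻¹' U) := (hUc.translate_preimage_right
    z₀).linear_preimage ((LinearMap.toSpanSingleton ℂ E v).restrictScalars ℝ)
  have hzero := (analyticOnNhd_comp_line hU hf z₀ v).eqOn_zero_of_preconnected_of_eventuallyEq_zero
    hconvex.isPreconnected (by simpa using hz₀) (analyticOrderAt_eq_top.1 htop)
    (by simpa using hv : (1 : ℂ) ∈ _)
  exact hfv (by simpa using hzero)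

theorem analyticOrderAt_fderiv_apply_comp_line_add_one (hU : IsOpen U)
    (hf : DifferentiableOn ℂ f U) (hz₀ : z₀ ∈ U) (hfz₀ : f z₀ = 0) (v : E) :
    analyticOrderAt (fun t : ℂ ↦ fderiv ℂ f (z₀ + t • v) v) 0 + 1 =
      analyticOrderAt (fun t : ℂ ↦ f (z₀ + t • v)) 0 := by
  have hmem : (0 : ℂ) ∈ (fun t : ℂ ↦ z₀ + t • v) ⁻¹' U := by simpa using hz₀
  have hderiv : (fun t : ℂ ↦ fderiv ℂ f (z₀ + t • v) v) =ᶠ[𝓝 0]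
      deriv fun t : ℂ ↦ f (z₀ + t • v) := by
    filter_upwards [(hU.preimage (by fun_prop)).mem_nhds hmem] with t ht
    have hline : HasDerivAt (fun t : ℂ ↦ z₀ + t • v) v t := by
      simpa using ((hasDerivAt_id t).smul_const v).const_add z₀
    exact ((hf.differentiableAt (hU.mem_nhds ht)).hasFDerivAt.comp_hasDerivAt t hline).deriv.symm
  rw [analyticOrderAt_congr hderiv,
    (analyticOnNhd_comp_line hU hf z₀ v 0 hmem).analyticOrderAt_deriv_add_one]
  simp [hfz₀]

variable [FiniteDimensional ℂ E] [MeasurableSpace E] [BorelSpace E]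

theorem finiteAtFilter_nhdsWithin_zeros_of_analyticOrderAt_eq (hU : IsOpen U)
    (hf : DifferentiableOn ℂ f U) (hz₀ : z₀ ∈ U) {v : E} {k : ℕ}
    (hk : analyticOrderAt (fun t : ℂ ↦ f (z₀ + t • v)) 0 = k) :
    μH[2 * (Module.finrank ℂ E : ℝ) - 2].FiniteAtFilter (𝓝[{z | f z = 0}] z₀) := by
  induction k generalizing f with
  | zero =>
    have hfz₀ : f z₀ ≠ 0 := by
      simpa using (analyticOnNhd_comp_line hU hf z₀ v 0
        (by simpa using hz₀)).analyticOrderAt_eq_zero.1 hk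
    have hne : ∀ᶠ z in 𝓝 z₀, f z ≠ 0 :=
      (hf.continuousOn.continuousAt (hU.mem_nhds hz₀)).eventually_ne hfz₀
    exact ⟨∅, mem_nhdsWithin_iff_eventually.2 hne, by simp⟩
  | succ k ih =>
    have hfz₀ : f z₀ = 0 := by
      simpa using apply_eq_zero_of_analyticOrderAt_ne_zero (hk.trans_ne (by simp))
    have hsing : μH[2 * (Module.finrank ℂ E : ℝ) - 2].FiniteAtFilter
        (𝓝[{z | fderiv ℂ f z v = 0}] z₀) := by
      refine ih (differentiableOn_fderiv_apply hU hf v) ?_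
      have horder := analyticOrderAt_fderiv_apply_comp_line_add_one hU hf hz₀ hfz₀ v
      rw [hk, Nat.cast_succ] at horder
      exact ENat.add_left_injective_of_ne_top ENat.one_ne_top horder
    have hregular := finiteAtFilter_nhdsWithin_regularZeros hU hf hz₀ hfz₀
      (frequently_ne_zero_of_analyticOrderAt_comp_line_ne_top (hk.trans_ne (ENat.natCast_ne_top _)))
    have hcover : {z | f z = 0} ⊆ {z | f z = 0 ∧ fderiv ℂ f z ≠ 0} ∪ {z | fderiv ℂ f z v = 0} :=
      fun z hz ↦ or_iff_not_imp_right.2 fun hv ↦ ⟨hz, fun h ↦ hv (by simp [h])⟩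
    refine .filter_mono (nhdsWithin_mono z₀ hcover) ?_
    rw [nhdsWithin_union]
    exact hregular.filterSup hsing

theorem finiteAtFilter_nhdsWithin_zeros (hU : IsOpen U) (hf : DifferentiableOn ℂ f U)
    (hz₀ : z₀ ∈ U) (hnv : ∃ᶠ z in 𝓝 z₀, f z ≠ 0) :
    μH[2 * (Module.finrank ℂ E : ℝ) - 2].FiniteAtFilter (𝓝[{z | f z = 0}] z₀) := by
  obtain ⟨r, hr, hrU⟩ := Metric.isOpen_iff.1 hU z₀ hz₀
  obtain ⟨w, hfw, hw⟩ := (hnv.and_eventually (ball_mem_nhds z₀ hr)).exists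
  obtain ⟨v, rfl⟩ : ∃ v, w = z₀ + v := ⟨w - z₀, (add_sub_cancel z₀ w).symm⟩
  obtain ⟨k, hk⟩ := ENat.ne_top_iff_exists.1 <| analyticOrderAt_comp_line_ne_top isOpen_ball
    (convex_ball z₀ r) (hf.mono hrU) (mem_ball_self hr) hw hfw
  exact finiteAtFilter_nhdsWithin_zeros_of_analyticOrderAt_eq hU hf hz₀ hk.symm

end Order

theorem zero_set_locally_finite_hausdorff_measure_general {E F : Type*} [NormedAddCommGroup E]
    [NormedSpace ℂ E] [FiniteDimensional ℂ E] [MeasurableSpace E] [BorelSpace E]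
    [NormedAddCommGroup F] [NormedSpace ℂ F] [CompleteSpace F] {U : Set E} (hU : IsOpen U)
    {f : E → F} (hf : DifferentiableOn ℂ f U) {z₀ : E} (hz₀ : z₀ ∈ U)
    (hnv : ∀ V ∈ 𝓝 z₀, ∃ z ∈ V, f z ≠ 0) :
    ∃ V : Set E, IsOpen V ∧ z₀ ∈ V ∧ V ⊆ U ∧
      μH[2 * (Module.finrank ℂ E : ℝ) - 2] {z ∈ V | f z = 0} < ⊤ := by
  obtain ⟨s, hs, hfinite⟩ := finiteAtFilter_nhdsWithin_zeros hU hf hz₀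
    (frequently_iff.2 fun hV ↦ hnv _ hV)
  obtain ⟨V, hV, hzV, hVs⟩ := mem_nhdsWithin.1 hs
  exact ⟨V ∩ U, hV.inter hU, ⟨hzV, hz₀⟩, inter_subset_right,
    (measure_mono fun z hz ↦ hVs ⟨hz.1.1, hz.2⟩).trans_lt hfinite⟩

/-- Near any point `z₀` at which a holomorphic function `f` on an open set `U ⊆ ℂⁿ`
does not vanish identically, the zero hypersurface `Z_f = f⁻¹(0)` has finite
`(2n−2)`-dimensional Hausdorff measure in some open neighborhood `V ⊆ U` of `z₀`;
in particular `Z_f` has locally finite `(2n−2)`-dimensional volume near each of its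
points, including singular points. -/
theorem zero_set_locally_finite_hausdorff_measure
    (n : ℕ) (hn : 1 ≤ n) (U : Set (EuclideanSpace ℂ (Fin n))) (hU : IsOpen U)
    (f : EuclideanSpace ℂ (Fin n) → ℂ) (hf : DifferentiableOn ℂ f U)
    (z₀ : EuclideanSpace ℂ (Fin n)) (hz₀ : z₀ ∈ U)
    (hnv : ∀ V ∈ nhds z₀, ∃ z ∈ V, f z ≠ 0) :
    ∃ V : Set (EuclideanSpace ℂ (Fin n)), IsOpen V ∧ z₀ ∈ V ∧ V ⊆ U ∧
      μH[2 * (n : ℝ) - 2] {z ∈ V | f z = 0} < ⊤ := by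
  simpa only [finrank_euclideanSpace_fin] using
    zero_set_locally_finite_hausdorff_measure_general hU hf hz₀ hnv
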